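/- arXiv:2502.18788 — 2 statements merged into one kernel-verified Lean document; each statement's English description precedes it below -/
import Mathlib

section
/- Let X be a metric arc and s ≥ 1. Then ‖X‖_{s-var} = H_{1/s}(X)^s, where both sides are elements of [0,∞] (with the convention that ∞^s = ∞). -/
open scoped ENNReal

/-- `f` parametrizes the metric space `X` as an arc: `f` is a continuous injection
of the compact interval `[0,1]` onto `X` (equivalently, a homeomorphism from `[0,1]`
onto `X`). -/
def IsArcParam {X : Type*} [MetricSpace X] (f : ℝ → X) : Prop :=
  ContinuousOn f (Set.Icc 0 1) ∧ Set.InjOn f (Set.Icc 0 1) ∧ f '' Set.Icc 0 1 = Set.univ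

/-- `X` is a metric arc: there is a homeomorphism from `[0,1]` onto `X`. -/
def IsMetricArc (X : Type*) [MetricSpace X] : Prop :=
  ∃ f : ℝ → X, IsArcParam f

/-- `A` is a subarc of the metric arc `X`: the image of a closed subinterval of `[0,1]`
under a homeomorphism from `[0,1]` onto `X`. -/
def IsSubarc {X : Type*} [MetricSpace X] (A : Set X) : Prop :=
  ∃ (f : ℝ → X) (a b : ℝ), IsArcParam f ∧ 0 ≤ a ∧ a ≤ b ∧ b ≤ 1 ∧ A = f '' Set.Icc a b

/-- The interior of a subarc `A`, described intrinsically: the points of `A` whose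
removal disconnects `A`.  For `A = f '' [a,b]` (with `a < b`) this is exactly
`f '' (a,b)`, i.e. `A` without its two endpoints. -/
def arcInterior {X : Type*} [MetricSpace X] (A : Set X) : Set X :=
  {x | x ∈ A ∧ ¬ IsPreconnected (A \ {x})}

/-- A partition of the metric arc `X`: a finite collection of subarcs with pairwise
disjoint interiors whose union is `X`. -/
def IsArcPartition {X : Type*} [MetricSpace X] (P : Finset (Set X)) : Prop :=
  (∀ A ∈ P, IsSubarc A) ∧
    ((P : Set (Set X)).Pairwise fun A B => Disjoint (arcInterior A) (arcInterior B)) ∧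
    ⋃₀ (P : Set (Set X)) = Set.univ

/-- The `s`-variation `‖X‖_{s-var}` of `X`: the supremum over all partitions of `X`
of the sums `∑ (diam A)^s`. -/
noncomputable def sVariation (X : Type*) [MetricSpace X] (s : ℝ) : ℝ≥0∞ :=
  ⨆ (P : Finset (Set X)) (_ : IsArcPartition P), ∑ A ∈ P, EMetric.diam A ^ s

/-- `H_{1/s}(X)`: the infimum of all `H` for which there is a surjection
`f : [0,1] → X` with `edist (f x) (f y) ≤ H * (edist x y)^(1/s)`; it equals `∞`
if no such surjection exists. -/
noncomputable def holderConstant (X : Type*) [MetricSpace X] (s : ℝ) : ℝ≥0∞ :=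
  sInf {H : ℝ≥0∞ | ∃ f : ℝ → X, f '' Set.Icc 0 1 = Set.univ ∧
    ∀ x ∈ Set.Icc (0:ℝ) 1, ∀ y ∈ Set.Icc (0:ℝ) 1, edist (f x) (f y) ≤ H * edist x y ^ (1 / s)}

/-!
If `g : [0,1] → X` is a surjection with `d(g x, g y)^s ≤ L |x - y|`, then for each subarc `A` of a
partition there is an interval whose endpoints `g` sends to two points realizing `diam A` and whose
interior `g` maps into the interior of `A`. These open intervals are disjoint, so their lengths sum
to at most `1`, and `∑ (diam A)^s ≤ L`.

Conversely, let `γ` be a homeomorphism from `[0,1]` onto `X`, let `w t` be the `s`-variation of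
`γ [0,t]`, and suppose that `w 1` is finite. Adding the subarc `γ [a,b]` to a partition of
`γ [0,a]` shows that `w a + d(γ a, γ b)^s ≤ w b`. Hence `γ = g ∘ w`, where `g` satisfies
`d(g x, g y)^s ≤ |x - y|` on `[0, w 1]`, and rescaling this interval to `[0,1]` produces the
constant `w 1 = ‖X‖_{s-var}`.
-/

section

open MeasureTheory Set unitInterval

section LinearOrder

lemma mem_uIoo_of_notMem_uIcc {δ : Type*} [LinearOrder δ] {u v x : δ} (hu : u ∉ uIcc x v)
    (hv : v ∉ uIcc u x) : x ∈ uIoo u v := by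
  simp only [mem_uIcc, uIoo, mem_Ioo, inf_lt_iff, lt_sup_iff] at *
  grind

variable {α : Type*} [TopologicalSpace α] [ConditionallyCompleteLinearOrder α] [OrderTopology α]
  [DenselyOrdered α]

lemma isPreconnected_Icc_sdiff_singleton_iff {a b c : α} (hc : c ∈ Icc a b) :
    IsPreconnected (Icc a b \ {c}) ↔ c ∉ Ioo a b := by
  refine ⟨fun h hc' => ?_, fun hc' => ?_⟩
  · have hab : a ≤ b := hc.1.trans hc.2
    exact (h.ordConnected.out ⟨left_mem_Icc.2 hab, hc'.1.ne⟩ ⟨right_mem_Icc.2 hab, hc'.2.ne'⟩ hc).2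
      rfl
  · obtain rfl | rfl : c = a ∨ c = b := by
      simpa [hc', or_comm] using eq_endpoints_or_mem_Ioo_of_mem_Icc hc
    · rw [Icc_sdiff_left]
      exact isPreconnected_Ioc
    · rw [Icc_sdiff_right]
      exact isPreconnected_Ico

/-- Between the last visit `p'` to `φ p` before `q` and the first visit `q'` to `φ q` after `p'`,
the path meets neither value. -/
lemma exists_mapsTo_uIoo {δ : Type*} [LinearOrder δ] [TopologicalSpace δ] [OrderClosedTopology δ]
    {φ : α → δ} (hφ : Continuous φ) (p q : α) :
    ∃ p' q', φ p' = φ p ∧ φ q' = φ q ∧ MapsTo φ (uIoo p' q') (uIoo (φ p) (φ q)) := by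
  wlog hpq : p ≤ q generalizing p q
  · obtain ⟨q', p', hq', hp', h⟩ := this q p (le_of_not_ge hpq)
    exact ⟨p', q', hp', hq', by rwa [uIoo_comm, uIoo_comm (φ p)]⟩
  have isCompact_fiber (a b : α) (u : δ) : IsCompact (Icc a b ∩ φ ⁻¹' {u}) :=
    isCompact_Icc.inter_right (isClosed_singleton.preimage hφ)
  obtain ⟨p', ⟨hp', hφp⟩, hlast⟩ :=
    (isCompact_fiber p q (φ p)).exists_isGreatest ⟨p, left_mem_Icc.2 hpq, rfl⟩
  obtain ⟨q', ⟨hq', hφq⟩, hfirst⟩ :=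
    (isCompact_fiber p' q (φ q)).exists_isLeast ⟨q, right_mem_Icc.2 hp'.2, rfl⟩
  refine ⟨p', q', hφp, hφq, fun r hr => ?_⟩
  rw [uIoo_of_le hq'.1] at hr
  apply mem_uIoo_of_notMem_uIcc
  · intro h
    obtain ⟨t, ht, hφt⟩ := intermediate_value_uIcc hφ.continuousOn (hφq ▸ h)
    rw [uIcc_of_le hr.2.le] at ht
    exact (hr.1.trans_le ht.1).not_ge
      (hlast ⟨⟨hp'.1.trans (hr.1.le.trans ht.1), ht.2.trans hq'.2⟩, hφt⟩)
  · intro h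
    obtain ⟨t, ht, hφt⟩ := intermediate_value_uIcc hφ.continuousOn (hφp ▸ h)
    rw [uIcc_of_le hr.1.le] at ht
    exact (ht.2.trans_lt hr.2).not_ge (hfirst ⟨⟨ht.1, ht.2.trans (hr.2.le.trans hq'.2)⟩, hφt⟩)

end LinearOrder

section Holder

lemma exists_ediam_eq_edist_of_isCompact {X : Type*} [PseudoEMetricSpace X] {A : Set X}
    (hA : IsCompact A) (hne : A.Nonempty) : ∃ x ∈ A, ∃ y ∈ A, Metric.ediam A = edist x y := by
  obtain ⟨⟨x, y⟩, ⟨hx, hy⟩, hmax⟩ :=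
    (hA.prod hA).exists_isMaxOn (hne.prod hne) continuous_edist.continuousOn
  exact ⟨x, hx, y, hy, le_antisymm
    (Metric.ediam_le fun x' hx' y' hy' => hmax (mk_mem_prod hx' hy'))
    (Metric.edist_le_ediam_of_mem hx hy)⟩

lemma le_mul_rpow_one_div_iff {s : ℝ} (hs : 0 < s) {x H d : ℝ≥0∞} :
    x ≤ H * d ^ (1 / s) ↔ x ^ s ≤ H ^ s * d := by
  rw [← ENNReal.rpow_le_rpow_iff hs, ENNReal.mul_rpow_of_nonneg _ _ hs.le, ← ENNReal.rpow_mul,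
    one_div_mul_cancel hs.ne', ENNReal.rpow_one]

lemma continuous_of_edist_rpow_le {X Y : Type*} [PseudoEMetricSpace X] [PseudoEMetricSpace Y]
    {s : ℝ} (hs : 0 < s) {L : ℝ≥0∞} (hL : L ≠ ∞) {g : Y → X}
    (hg : ∀ x y, edist (g x) (g y) ^ s ≤ L * edist x y) : Continuous g := by
  have hC : L ^ (1 / s) ≠ ∞ := ENNReal.rpow_ne_top_of_nonneg (one_div_nonneg.2 hs.le) hL
  have : HolderWith (L ^ (1 / s)).toNNReal ⟨1 / s, one_div_nonneg.2 hs.le⟩ g := fun x y => by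
    rw [ENNReal.coe_toNNReal hC]
    refine (le_mul_rpow_one_div_iff hs).2 ?_
    rw [← ENNReal.rpow_mul, one_div_mul_cancel hs.ne', ENNReal.rpow_one]
    exact hg x y
  exact this.continuous (NNReal.coe_pos.1 (one_div_pos.2 hs))

lemma edist_toReal_of_le {x y : ℝ≥0∞} (hxy : x ≤ y) (hy : y ≠ ∞) :
    edist x.toReal y.toReal = y - x := by
  rw [edist_comm, edist_dist, Real.dist_eq, ← ENNReal.toReal_sub_of_le hxy hy,
    abs_of_nonneg ENNReal.toReal_nonneg, ENNReal.ofReal_toReal (ENNReal.sub_ne_top hy)]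

variable {ι X : Type*} [TopologicalSpace ι] {s : ℝ} {γ : ι → X}

lemma edist_rpow_le_ediam_image_Ioo [LinearOrder ι] [OrderTopology ι] [DenselyOrdered ι]
    [PseudoEMetricSpace X] {Y : Type*} [PseudoEMetricSpace Y] (hs : 0 < s) (hγ : Continuous γ)
    {w : ι → Y} (hγw : ∀ a b, edist (γ a) (γ b) ^ s ≤ edist (w a) (w b)) {a b : ι} (hab : a ≤ b) :
    edist (γ a) (γ b) ^ s ≤ Metric.ediam (w '' Ioo a b) := by
  rcases hab.eq_or_lt with rfl | hlt
  · simp [hs]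
  have himage : γ '' Icc a b ⊆ closure (γ '' Ioo a b) := by
    simpa only [closure_Ioo hlt.ne] using (hγ.continuousOn (s := closure (Ioo a b))).image_closure
  rw [← ENNReal.le_rpow_inv_iff hs]
  calc edist (γ a) (γ b) ≤ Metric.ediam (γ '' Icc a b) := Metric.edist_le_ediam_of_mem
        (mem_image_of_mem γ (left_mem_Icc.2 hab)) (mem_image_of_mem γ (right_mem_Icc.2 hab))
    _ ≤ Metric.ediam (γ '' Ioo a b) := (Metric.ediam_mono himage).trans_eq (Metric.ediam_closure _)
    _ ≤ Metric.ediam (w '' Ioo a b) ^ s⁻¹ := Metric.ediam_image_le_iff.2 fun u hu v hv => by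
        rw [ENNReal.le_rpow_inv_iff hs]
        exact (hγw u v).trans (Metric.edist_le_ediam_of_mem (mem_image_of_mem w hu)
          (mem_image_of_mem w hv))

/-- With `τ y = sup {t | w t ≤ y}`, the factor is `γ ∘ τ`. A jump of `w` at `t` is harmless, as `τ`
is constant, equal to `t`, on the corresponding gap. -/
lemma exists_comp_eq_of_edist_rpow_le [CompleteLinearOrder ι] [OrderTopology ι] [DenselyOrdered ι]
    [EMetricSpace X] (hs : 0 < s) (hγ : Continuous γ) {w : ι → ℝ} (hw : Monotone w)
    (hγw : ∀ a b, edist (γ a) (γ b) ^ s ≤ edist (w a) (w b)) :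
    ∃ g : ℝ → X, g ∘ w = γ ∧ ∀ x y, edist (g x) (g y) ^ s ≤ edist x y := by
  let τ : ℝ → ι := fun y => sSup {t | w t ≤ y}
  have lt_of_τ_lt {y : ℝ} {u : ι} (hu : τ y < u) : y < w u :=
    lt_of_not_ge fun h => hu.not_ge (le_sSup h)
  have le_of_lt_τ {y : ℝ} {u : ι} (hu : u < τ y) : w u ≤ y := by
    obtain ⟨t, ht, hut⟩ := lt_sSup_iff.1 hu
    exact (hw hut.le).trans ht
  refine ⟨γ ∘ τ, funext fun t => ?_, fun x y => ?_⟩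
  · have hconst : w '' Ioo t (τ (w t)) ⊆ {w t} := image_subset_iff.2 fun u hu =>
      le_antisymm (le_of_lt_τ hu.2) (hw hu.1.le)
    have hle : t ≤ τ (w t) := le_sSup (le_refl (w t))
    have hzero : edist (γ t) (γ (τ (w t))) ^ s ≤ 0 :=
      (edist_rpow_le_ediam_image_Ioo hs hγ hγw hle).trans
        ((Metric.ediam_mono hconst).trans_eq Metric.ediam_singleton)
    rw [nonpos_iff_eq_zero, ENNReal.rpow_eq_zero_iff_of_pos hs, edist_eq_zero] at hzero
    exact hzero.symm
  · wlog hxy : x ≤ y generalizing x y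
    · rw [edist_comm, edist_comm x]
      exact this y x (le_of_not_ge hxy)
    have hIcc : w '' Ioo (τ x) (τ y) ⊆ Icc x y := image_subset_iff.2 fun u hu =>
      ⟨(lt_of_τ_lt hu.1).le, le_of_lt_τ hu.2⟩
    calc edist (γ (τ x)) (γ (τ y)) ^ s ≤ Metric.ediam (w '' Ioo (τ x) (τ y)) :=
          edist_rpow_le_ediam_image_Ioo hs hγ hγw (sSup_le_sSup fun t ht => le_trans ht hxy)
      _ ≤ Metric.ediam (Icc x y) := Metric.ediam_mono hIcc
      _ = edist x y := by
          rw [Real.ediam_Icc, edist_comm, edist_dist, Real.dist_eq,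
            abs_of_nonneg (sub_nonneg.2 hxy)]

lemma exists_range_subset_of_add_edist_rpow_le [EMetricSpace X] (hs : 0 < s) {γ : I → X}
    (hγ : Continuous γ) {w : I → ℝ≥0∞} (hw1 : w 1 ≠ ∞)
    (hw : ∀ a b, a ≤ b → w a + edist (γ a) (γ b) ^ s ≤ w b) :
    ∃ g : I → X, range γ ⊆ range g ∧ ∀ x y, edist (g x) (g y) ^ s ≤ w 1 * edist x y := by
  have hmono : Monotone w := fun a b hab => le_self_add.trans (hw a b hab)
  have hfin (t : I) : w t ≠ ∞ := ne_top_of_le_ne_top hw1 (hmono unitInterval.le_one')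
  have hmonoReal : Monotone fun t => (w t).toReal := fun a b hab =>
    ENNReal.toReal_mono (hfin b) (hmono hab)
  have hcontrol (a b : I) : edist (γ a) (γ b) ^ s ≤ edist (w a).toReal (w b).toReal := by
    wlog hab : a ≤ b generalizing a b
    · rw [edist_comm, edist_comm (w a).toReal]
      exact this b a (le_of_not_ge hab)
    rw [edist_toReal_of_le (hmono hab) (hfin b)]
    exact ENNReal.le_sub_of_add_le_left (hfin a) (hw a b hab)
  obtain ⟨g, hgw, hg⟩ := exists_comp_eq_of_edist_rpow_le hs hγ hmonoReal hcontrol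
  set V := (w 1).toReal with hV
  have hV0 : 0 ≤ V := ENNReal.toReal_nonneg
  refine ⟨fun x => g (V * x), ?_, fun x y => (hg _ _).trans_eq ?_⟩
  · rintro _ ⟨t, rfl⟩
    have ht0 : 0 ≤ (w t).toReal := ENNReal.toReal_nonneg
    have htV : (w t).toReal ≤ V := hmonoReal unitInterval.le_one'
    refine ⟨⟨(w t).toReal / V, div_nonneg ht0 hV0, div_le_one_of_le₀ htV hV0⟩, ?_⟩
    have hcancel : V * ((w t).toReal / V) = (w t).toReal :=
      mul_div_cancel_of_imp' fun h => le_antisymm (h ▸ htV) ht0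
    exact (congrArg g hcancel).trans (congrFun hgw t)
  · rw [← smul_eq_mul, ← smul_eq_mul, edist_smul₀, ENNReal.smul_def, ← enorm_eq_nnnorm,
      Real.enorm_of_nonneg hV0, hV, ENNReal.ofReal_toReal hw1, smul_eq_mul, Subtype.edist_eq]

end Holder

section Arc

variable {X : Type*} [MetricSpace X] {s : ℝ}

lemma IsArcParam.exists_homeomorph {f : ℝ → X} (hf : IsArcParam f) :
    ∃ e : I ≃ₜ X, ∀ t, e t = f t := by
  obtain ⟨hcont, hinj, hsurj⟩ := hf
  have hbij : Function.Bijective (domRestrict I f) :=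
    ⟨hinj.injective, by rw [← range_eq_univ, range_domRestrict, hsurj]⟩
  exact ⟨Continuous.homeoOfEquivCompactToT2 (f := .ofBijective _ hbij) hcont.domRestrict,
    fun _ => rfl⟩

lemma IsMetricArc.nonempty_homeomorph (hX : IsMetricArc X) : Nonempty (I ≃ₜ X) :=
  let ⟨_, hf⟩ := hX
  let ⟨e, _⟩ := hf.exists_homeomorph
  ⟨e⟩

lemma isArcParam_IccExtend (e : I ≃ₜ X) : IsArcParam (IccExtend zero_le_one e) := by
  refine ⟨(e.continuous.Icc_extend').continuousOn, fun x hx y hy h => ?_, ?_⟩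
  · rw [IccExtend_of_mem _ _ hx, IccExtend_of_mem _ _ hy] at h
    exact congrArg Subtype.val (e.injective h)
  · exact eq_univ_of_forall fun x =>
      ⟨e.symm x, (e.symm x).2, by rw [IccExtend_val, e.apply_symm_apply]⟩

lemma isSubarc_iff_exists_homeomorph {A : Set X} :
    IsSubarc A ↔ ∃ (e : I ≃ₜ X) (a b : I), a ≤ b ∧ A = e '' Icc a b := by
  constructor
  · rintro ⟨f, a, b, hf, ha, hab, hb, rfl⟩
    obtain ⟨e, he⟩ := hf.exists_homeomorph
    lift a to I using ⟨ha, hab.trans hb⟩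
    lift b to I using ⟨ha.trans hab, hb⟩
    refine ⟨e, a, b, hab, ?_⟩
    rw [← image_subtype_val_Icc, image_image]
    simp only [he]
  · rintro ⟨e, a, b, hab, rfl⟩
    refine ⟨_, a, b, isArcParam_IccExtend e, a.2.1, hab, b.2.2, ?_⟩
    rw [← image_subtype_val_Icc, image_image]
    simp only [IccExtend_val]

lemma arcInterior_subset (A : Set X) : arcInterior A ⊆ A := fun _ hx => hx.1

lemma arcInterior_image_Icc {α : Type*} [TopologicalSpace α] [ConditionallyCompleteLinearOrder α]
    [OrderTopology α] [DenselyOrdered α] (e : α ≃ₜ X) (a b : α) :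
    arcInterior (e '' Icc a b) = e '' Ioo a b := by
  refine Subset.antisymm ?_ (image_subset_iff.2 fun c hc => ?_)
  · rintro _ ⟨⟨c, hc, rfl⟩, hpre⟩
    rw [← image_singleton, ← image_sdiff e.injective, e.isPreconnected_image,
      isPreconnected_Icc_sdiff_singleton_iff hc, not_not] at hpre
    exact mem_image_of_mem e hpre
  · have hc' := Ioo_subset_Icc_self hc
    refine ⟨mem_image_of_mem e hc', ?_⟩
    rwa [← image_singleton, ← image_sdiff e.injective, e.isPreconnected_image,
      isPreconnected_Icc_sdiff_singleton_iff hc', not_not]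

lemma IsSubarc.exists_mapsTo_arcInterior {A : Set X} (hA : IsSubarc A) {g : I → X}
    (hg : Continuous g) (hsurj : Function.Surjective g) :
    ∃ p q : I, Metric.ediam A = edist (g p) (g q) ∧ MapsTo g (uIoo p q) (arcInterior A) := by
  obtain ⟨e, a, b, hab, rfl⟩ := isSubarc_iff_exists_homeomorph.1 hA
  obtain ⟨_, ⟨u, hu, rfl⟩, _, ⟨v, hv, rfl⟩, hdiam⟩ := exists_ediam_eq_edist_of_isCompact
    (isCompact_Icc.image e.continuous) ((nonempty_Icc.2 hab).image e)
  obtain ⟨p₀, hp₀⟩ := hsurj (e u)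
  obtain ⟨q₀, hq₀⟩ := hsurj (e v)
  obtain ⟨p, q, hp, hq, hmaps⟩ := exists_mapsTo_uIoo (e.symm.continuous.comp hg) p₀ q₀
  simp only [Function.comp_apply, hp₀, hq₀, e.symm_apply_apply, e.symm_apply_eq] at hp hq hmaps
  refine ⟨p, q, by rw [hdiam, hp, hq], fun r hr => ?_⟩
  rw [arcInterior_image_Icc]
  exact ⟨e.symm (g r), Ioo_subset_Ioo (le_inf hu.1 hv.1) (sup_le hu.2 hv.2) (hmaps hr),
    e.apply_symm_apply _⟩

lemma sum_ediam_rpow_le (hs : 0 < s) {P : Finset (Set X)} (hP : ∀ A ∈ P, IsSubarc A)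
    (hdisj : (P : Set (Set X)).Pairwise fun A B => Disjoint (arcInterior A) (arcInterior B))
    {g : I → X} (hsurj : Function.Surjective g) {L : ℝ≥0∞}
    (hg : ∀ x y, edist (g x) (g y) ^ s ≤ L * edist x y) :
    ∑ A ∈ P, Metric.ediam A ^ s ≤ L := by
  rcases eq_or_ne L ∞ with rfl | hL
  · exact le_top
  have hcont : Continuous g := continuous_of_edist_rpow_le hs hL hg
  choose! p q hdiam hmaps using fun A hA => (hP A hA).exists_mapsTo_arcInterior hcont hsurj
  have hpairwise : (P : Set (Set X)).PairwiseDisjoint fun A => uIoo (p A) (q A) :=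
    fun A hA B hB hAB =>
      ((hdisj hA hB hAB).preimage g).mono (hmaps A hA) (hmaps B hB)
  calc ∑ A ∈ P, Metric.ediam A ^ s ≤ ∑ A ∈ P, L * volume (uIoo (p A) (q A)) :=
        Finset.sum_le_sum fun A hA => by
          rw [hdiam A hA, unitInterval.volume_uIoo, edist_comm (q A)]
          exact hg _ _
    _ = L * volume (⋃ A ∈ P, uIoo (p A) (q A)) := by
        rw [measure_biUnion_finset hpairwise fun _ _ => measurableSet_Ioo, Finset.mul_sum]
    _ ≤ L * 1 := by gcongr; exact prob_le_one
    _ = L := mul_one L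

lemma le_holderConstant_rpow_iff (hs : 0 < s) {v : ℝ≥0∞} :
    v ≤ holderConstant X s ^ s ↔ ∀ (g : I → X) (L : ℝ≥0∞), Function.Surjective g →
      (∀ x y, edist (g x) (g y) ^ s ≤ L * edist x y) → v ≤ L := by
  rw [← ENNReal.rpow_inv_le_iff hs, holderConstant, le_sInf_iff]
  constructor
  · intro h g L hsurj hg
    rw [← ENNReal.rpow_le_rpow_iff (inv_pos.2 hs)]
    refine h _ ⟨IccExtend zero_le_one g, ?_, fun x hx y hy => ?_⟩
    · refine eq_univ_of_forall fun x => ?_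
      obtain ⟨t, rfl⟩ := hsurj x
      exact ⟨t, t.2, IccExtend_val _ _ t⟩
    · rw [le_mul_rpow_one_div_iff hs, ENNReal.rpow_inv_rpow hs.ne',
        IccExtend_of_mem _ _ hx, IccExtend_of_mem _ _ hy]
      exact hg ⟨x, hx⟩ ⟨y, hy⟩
  · rintro h H ⟨f, hsurj, hf⟩
    rw [ENNReal.rpow_inv_le_iff hs]
    refine h (domRestrict I f) _ ?_ fun x y => (le_mul_rpow_one_div_iff hs).1 (hf x x.2 y y.2)
    rw [← range_eq_univ, range_domRestrict, hsurj]

lemma sVariation_le_holderConstant_rpow (hs : 0 < s) :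
    sVariation X s ≤ holderConstant X s ^ s :=
  (le_holderConstant_rpow_iff hs).2 fun _ _ hsurj hg =>
    iSup₂_le fun _ hP => sum_ediam_rpow_le hs hP.1 hP.2.1 hsurj hg

/-- `P` is a partition of the subset `S` of an arc into subarcs of that arc. It extends
`IsArcPartition`, the case `S = univ`, to the initial segments of an arc. -/
def IsArcPartitionOn (P : Finset (Set X)) (S : Set X) : Prop :=
  (∀ A ∈ P, IsSubarc A) ∧
    ((P : Set (Set X)).Pairwise fun A B => Disjoint (arcInterior A) (arcInterior B)) ∧
    ⋃₀ (P : Set (Set X)) = S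

/-- The `s`-variation of a subset `S` of an arc: the supremum of the sums `∑ (diam A)^s` over the
partitions of `S` into subarcs, and `0` if there are none. -/
noncomputable def sVariationOn (S : Set X) (s : ℝ) : ℝ≥0∞ :=
  ⨆ (P : Finset (Set X)) (_ : IsArcPartitionOn P S), ∑ A ∈ P, Metric.ediam A ^ s

lemma sVariationOn_univ : sVariationOn (univ : Set X) s = sVariation X s := rfl

lemma IsSubarc.isArcPartitionOn_singleton {A : Set X} (hA : IsSubarc A) :
    IsArcPartitionOn {A} A :=
  ⟨by simpa using hA, by simp, by simp⟩

lemma IsArcPartitionOn.insert [DecidableEq (Set X)] {P : Finset (Set X)} {S B : Set X}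
    (hP : IsArcPartitionOn P S) (hB : IsSubarc B) (hBS : Disjoint (arcInterior B) S) :
    IsArcPartitionOn (insert B P) (B ∪ S) := by
  obtain ⟨hsub, hdisj, rfl⟩ := hP
  have hBA (A : Set X) (hA : A ∈ P) : Disjoint (arcInterior B) (arcInterior A) :=
    hBS.mono_right ((arcInterior_subset A).trans (subset_sUnion_of_mem hA))
  refine ⟨(Finset.forall_mem_insert _ _ _).2 ⟨hB, hsub⟩, ?_, ?_⟩
  · rw [Finset.coe_insert]
    exact hdisj.insert fun A hA _ => ⟨hBA A hA, (hBA A hA).symm⟩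
  · rw [Finset.coe_insert, sUnion_insert]

lemma sVariationOn_add_ediam_rpow_le {S B : Set X} (hS : ∃ P, IsArcPartitionOn P S)
    (hB : IsSubarc B) (hBS : Disjoint (arcInterior B) S) (hne : ¬ B ⊆ S) :
    sVariationOn S s + Metric.ediam B ^ s ≤ sVariationOn (B ∪ S) s := by
  classical
  rw [sVariationOn, ENNReal.biSup_add' hS]
  refine iSup₂_le fun P hP => ?_
  have hBP : B ∉ P := fun h => hne (hP.2.2 ▸ subset_sUnion_of_mem h)
  rw [add_comm, ← Finset.sum_insert (f := fun A => Metric.ediam A ^ s) hBP]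
  exact le_iSup₂_of_le _ (hP.insert hB hBS) le_rfl

lemma sVariationOn_image_Iic_add_edist_rpow_le (e : I ≃ₜ X) (hs : 0 < s) {a b : I} (hab : a ≤ b) :
    sVariationOn (e '' Iic a) s + edist (e a) (e b) ^ s ≤ sVariationOn (e '' Iic b) s := by
  rcases hab.eq_or_lt with rfl | hlt
  · simp [hs]
  have isSubarc_image {c d : I} (hcd : c ≤ d) : IsSubarc (e '' Icc c d) :=
    isSubarc_iff_exists_homeomorph.2 ⟨e, c, d, hcd, rfl⟩
  have hpart : ∃ P, IsArcPartitionOn P (e '' Iic a) :=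
    ⟨_, Icc_bot (a := a) ▸ (isSubarc_image bot_le).isArcPartitionOn_singleton⟩
  have hdisj : Disjoint (arcInterior (e '' Icc a b)) (e '' Iic a) := by
    rw [arcInterior_image_Icc, disjoint_image_iff e.injective]
    exact disjoint_left.2 fun t ht hta => ht.1.not_ge hta
  have hne : ¬ e '' Icc a b ⊆ e '' Iic a := by
    rw [image_subset_image_iff e.injective]
    exact fun h => hlt.not_ge (h (right_mem_Icc.2 hab))
  have hunion : e '' Icc a b ∪ e '' Iic a = e '' Iic b := by
    rw [← image_union, union_comm, Iic_union_Icc_eq_Iic hab]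
  calc sVariationOn (e '' Iic a) s + edist (e a) (e b) ^ s
      ≤ sVariationOn (e '' Iic a) s + Metric.ediam (e '' Icc a b) ^ s := by
        gcongr
        exact Metric.edist_le_ediam_of_mem (mem_image_of_mem e (left_mem_Icc.2 hab))
          (mem_image_of_mem e (right_mem_Icc.2 hab))
    _ ≤ sVariationOn (e '' Iic b) s :=
        hunion ▸ sVariationOn_add_ediam_rpow_le hpart (isSubarc_image hab) hdisj hne

lemma holderConstant_rpow_le_sVariation (hX : IsMetricArc X) (hs : 0 < s) :
    holderConstant X s ^ s ≤ sVariation X s := by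
  rcases eq_or_ne (sVariation X s) ∞ with htop | htop
  · exact htop ▸ le_top
  obtain ⟨e⟩ := hX.nonempty_homeomorph
  have htotal : sVariationOn (e '' Iic 1) s = sVariation X s := by
    rw [← sVariationOn_univ, show Iic (1 : I) = univ from Iic_top, image_univ, e.range_coe]
  obtain ⟨g, hrange, hg⟩ := exists_range_subset_of_add_edist_rpow_le hs e.continuous
    (w := fun t => sVariationOn (e '' Iic t) s) (htotal ▸ htop)
    fun a b hab => sVariationOn_image_Iic_add_edist_rpow_le e hs hab
  have hsurj : Function.Surjective g := fun x => hrange (e.surjective x)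
  rw [htotal] at hg
  exact (le_holderConstant_rpow_iff hs).1 le_rfl g _ hsurj hg

end Arc

end

theorem sVariation_eq_holderConstant_rpow_general (X : Type*) [MetricSpace X]
    (hX : IsMetricArc X) (s : ℝ) (hs : 0 < s) :
    sVariation X s = holderConstant X s ^ s :=
  le_antisymm (sVariation_le_holderConstant_rpow hs) (holderConstant_rpow_le_sVariation hX hs)

/-- For a metric arc `X` and `s ≥ 1`, `‖X‖_{s-var} = H_{1/s}(X) ^ s`. -/
theorem sVariation_eq_holderConstant_rpow (X : Type*) [MetricSpace X]
    (hX : IsMetricArc X) (s : ℝ) (hs : 1 ≤ s) :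
    sVariation X s = holderConstant X s ^ s :=
  sVariation_eq_holderConstant_rpow_general X hX s (one_pos.trans_le hs)
end

section
/- Let X be a metric arc and s ≥ 1. Then X is a (1/s)-Hölder arc, i.e., there exist a homeomorphism f from [0,1] onto X and H > 0 with d(f(x), f(y)) ≤ H|x − y|^{1/s} for all x, y ∈ [0,1], if and only if ‖X‖_{s-var} < ∞. -/
open scoped ENNReal

/-!
If `f` is `1/s`-Hölder with constant `H`, a subarc `f '' [a, b]` has `diam ^ s ≤ H ^ s (b - a)`,
and the parameter intervals of a partition have total length at most `1`.

Conversely, let `φ t` be the `s`-variation of `f` over `[0, t]`. It is superadditive over adjacent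
intervals, so `d(f a, f b) ^ s ≤ φ b - φ a`, and reparametrizing by `φ` makes `f` Hölder as soon as
`φ` is continuous. As a supremum of continuous functions of `t`, `φ` is lower semicontinuous.
Cutting a chain of points at `t` gives `φ x ≤ φ t + V + o(1)` as `x ↓ t`, where `V` is the
variation over `[t, x]`. By superadditivity and lower semicontinuity in the left endpoint, `V`
tends to `0`, so `φ` is also upper semicontinuous.
-/

section ChainVariation

open Set Filter Topology

variable {α β : Type*}

/-- The sum of `D x y` over the pairs `x, y` of consecutive entries of a list. -/
noncomputable def chainSum (D : α → α → ℝ≥0∞) : List α → ℝ≥0∞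
  | [] => 0
  | [_] => 0
  | a :: b :: l => D a b + chainSum D (b :: l)

theorem chainSum_add_le_chainSum_append (D : α → α → ℝ≥0∞) (l m : List α) :
    chainSum D l + chainSum D m ≤ chainSum D (l ++ m) := by
  induction l with
  | nil => simp [chainSum]
  | cons a l ih =>
    cases l with
    | nil => cases m <;> simp [chainSum]
    | cons b l =>
      simp only [List.cons_append, chainSum, add_assoc] at ih ⊢
      gcongr

theorem continuous_chainSum_map [TopologicalSpace α] [TopologicalSpace β] {D : α → α → ℝ≥0∞}
    (hD : Continuous (Function.uncurry D)) {g : β → α → α} (hg : ∀ x, Continuous (g · x))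
    (l : List α) : Continuous fun t => chainSum D (l.map (g t)) := by
  induction l with
  | nil => exact continuous_const
  | cons a l ih =>
    cases l with
    | nil => exact continuous_const
    | cons b l => exact (hD.comp₂ (hg a) (hg b)).add ih

theorem eventually_forall_mem_le_add [TopologicalSpace α] [TopologicalSpace β]
    {D : α → β → ℝ≥0∞} (hD : Continuous (Function.uncurry D)) {K : Set α} (hK : IsCompact K) {t : β}
    (hfin : ∀ u ∈ K, D u t ≠ ⊤) {ε : ℝ≥0∞} (hε : ε ≠ 0) :
    ∀ᶠ v in 𝓝 t, ∀ u ∈ K, D u v ≤ D u t + ε := by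
  refine hK.eventually_forall_of_forall_eventually fun u hu => ?_
  have hleft : Continuous fun z : β × α => D z.2 z.1 := hD.comp continuous_swap
  have hright : Continuous fun z : β × α => D z.2 t + ε :=
    (hD.comp₂ continuous_snd continuous_const).add continuous_const
  exact ((hleft.tendsto (t, u)).eventually_lt (hright.tendsto (t, u))
    (ENNReal.lt_add_right (hfin u hu) hε)).mono fun _ => le_of_lt

section Preorder

variable [Preorder α] {D : α → α → ℝ≥0∞}

/-- The supremum of the sums `D x₀ x₁ + ⋯ + D xₙ₋₁ xₙ` over all `x₀ ≤ ⋯ ≤ xₙ` in `s`. For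
`D x y = edist (f x) (f y) ^ p` this is the `p`-variation of `f` on `s`. -/
noncomputable def chainVariation (D : α → α → ℝ≥0∞) (s : Set α) : ℝ≥0∞ :=
  ⨆ (l : List α) (_ : l.Pairwise (· ≤ ·) ∧ ∀ x ∈ l, x ∈ s), chainSum D l

theorem chainSum_le_chainVariation {s : Set α} {l : List α} (hl : l.Pairwise (· ≤ ·))
    (hls : ∀ x ∈ l, x ∈ s) : chainSum D l ≤ chainVariation D s :=
  le_iSup₂_of_le l ⟨hl, hls⟩ le_rfl

theorem chainVariation_le_iff {s : Set α} {C : ℝ≥0∞} :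
    chainVariation D s ≤ C ↔
      ∀ l : List α, l.Pairwise (· ≤ ·) → (∀ x ∈ l, x ∈ s) → chainSum D l ≤ C := by
  simp only [chainVariation, iSup_le_iff, and_imp]

theorem chainVariation_mono {s t : Set α} (hst : s ⊆ t) :
    chainVariation D s ≤ chainVariation D t :=
  chainVariation_le_iff.2 fun _ hl hls => chainSum_le_chainVariation hl fun x hx => hst (hls x hx)

theorem apply_le_chainVariation {s : Set α} {a b : α} (ha : a ∈ s) (hb : b ∈ s) (hab : a ≤ b) :
    D a b ≤ chainVariation D s := by
  simpa [chainSum] using chainSum_le_chainVariation (D := D) (s := s) (l := [a, b])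
    (by simpa using hab) (by simp [ha, hb])

theorem chainVariation_add_le_chainVariation_union {s t : Set α} (hst : ∀ x ∈ s, ∀ y ∈ t, x ≤ y) :
    chainVariation D s + chainVariation D t ≤ chainVariation D (s ∪ t) := by
  refine ENNReal.biSup_add_biSup_le' ⟨[], by simp⟩ ⟨[], by simp⟩ fun l hl m hm => ?_
  refine (chainSum_add_le_chainSum_append D l m).trans (chainSum_le_chainVariation ?_ ?_)
  · exact List.pairwise_append.2 ⟨hl.1, hm.1, fun x hx y hy => hst x (hl.2 x hx) y (hm.2 y hy)⟩
  · simpa [or_imp, forall_and] using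
      ⟨fun x hx => Or.inl (hl.2 x hx), fun x hx => Or.inr (hm.2 x hx)⟩

theorem chainVariation_Iic_add_Icc_le {a b : α} (hab : a ≤ b) :
    chainVariation D (Iic a) + chainVariation D (Icc a b) ≤ chainVariation D (Iic b) :=
  (chainVariation_add_le_chainVariation_union fun _ hx _ hy => le_trans hx hy.1).trans
    (chainVariation_mono (union_subset (Iic_subset_Iic.2 hab) Icc_subset_Iic_self))

theorem chainVariation_Icc_add_Ici_le {a b : α} (hab : a ≤ b) :
    chainVariation D (Icc a b) + chainVariation D (Ici b) ≤ chainVariation D (Ici a) :=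
  (chainVariation_add_le_chainVariation_union fun _ hx _ hy => hx.2.trans hy).trans
    (chainVariation_mono (union_subset Icc_subset_Ici_self (Ici_subset_Ici.2 hab)))

-- Pushing chains into `s t` by the retraction `g t` exhibits the variation as a supremum of
-- functions which are continuous in `t`.
theorem lowerSemicontinuous_chainVariation [TopologicalSpace α] [TopologicalSpace β]
    (hD : Continuous (Function.uncurry D)) {s : β → Set α} {g : β → α → α}
    (hg : ∀ x, Continuous (g · x)) (hmono : ∀ t, Monotone (g t)) (hmem : ∀ t x, g t x ∈ s t)
    (hfix : ∀ t, ∀ x ∈ s t, g t x = x) :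
    LowerSemicontinuous fun t => chainVariation D (s t) := by
  have heq (t : β) : chainVariation D (s t) =
      ⨆ (l : List α) (_ : l.Pairwise (· ≤ ·)), chainSum D (l.map (g t)) := by
    refine le_antisymm (chainVariation_le_iff.2 fun l hl hls => ?_) (iSup₂_le fun l hl => ?_)
    · refine le_iSup₂_of_le l hl (le_of_eq ?_)
      rw [List.map_congr_left fun x hx => hfix t x (hls x hx), List.map_id']
    · exact chainSum_le_chainVariation (hl.map _ fun _ _ h => hmono t h) (by simp [hmem])
  simp only [heq]
  exact lowerSemicontinuous_biSup fun l _ =>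
    (continuous_chainSum_map hD hg l).lowerSemicontinuous

end Preorder

section LinearOrder

variable [LinearOrder α] {D : α → α → ℝ≥0∞}

-- A sorted list steps over `t` at most once, so the error `η` is paid at most once.
theorem chainSum_le_add_of_forall_le_add {t : α} {η : ℝ≥0∞} {l : List α}
    (hl : l.Pairwise (· ≤ ·)) (hη : ∀ u ∈ l, ∀ v ∈ l, u ≤ t → t ≤ v → D u v ≤ D u t + η) :
    chainSum D l ≤ chainSum D (l.map (min · t)) + chainSum D (l.map (max · t)) + η := by
  induction l with
  | nil => simp [chainSum]
  | cons a l ih =>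
    cases l with
    | nil => simp [chainSum]
    | cons b l =>
      have hab : a ≤ b := List.rel_of_pairwise_cons hl (by simp)
      rcases le_total b t with hbt | htb
      · have ih := ih hl.of_cons fun u hu v hv => hη u (.tail _ hu) v (.tail _ hv)
        simp only [List.map_cons, chainSum, min_eq_left hbt, min_eq_left (hab.trans hbt)] at ih ⊢
        refine (add_le_add_right ih (D a b)).trans ?_
        rw [← add_assoc, ← add_assoc]
        gcongr
        exact le_add_self
      · have hmax : (b :: l).map (max · t) = b :: l := by
          refine (List.map_congr_left fun x hx => max_eq_left ?_).trans (List.map_id' _)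
          rcases List.mem_cons.1 hx with rfl | hx
          exacts [htb, htb.trans (List.rel_of_pairwise_cons hl.of_cons hx)]
        have hstep : D a b ≤ D (min a t) (min b t) + D (max a t) b + η := by
          rcases le_total a t with hat | hta
          · rw [min_eq_left hat, min_eq_right htb, add_right_comm]
            exact le_add_right (hη a (by simp) b (by simp) hat htb)
          · rw [max_eq_left hta, add_right_comm]
            exact le_add_self
        rw [List.map_cons (l := b :: l), List.map_cons (l := b :: l), hmax]
        simp only [List.map_cons, chainSum]
        calc D a b + chainSum D (b :: l)
            ≤ D (min a t) (min b t) + D (max a t) b + η + chainSum D (b :: l) := by gcongr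
          _ = D (min a t) (min b t) + (D (max a t) b + chainSum D (b :: l)) + η := by ring
          _ ≤ _ := by gcongr; exact le_self_add

theorem chainVariation_Iic_le_add {t x : α} (htx : t ≤ x) {η : ℝ≥0∞}
    (hη : ∀ u ∈ Iic t, ∀ v ∈ Icc t x, D u v ≤ D u t + η) :
    chainVariation D (Iic x) ≤ chainVariation D (Iic t) + chainVariation D (Icc t x) + η := by
  refine chainVariation_le_iff.2 fun l hl hlx => ?_
  have hmin : Monotone (min · t) := fun _ _ h => min_le_min_right t h
  have hmax : Monotone (max · t) := fun _ _ h => max_le_max_right t h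
  refine (chainSum_le_add_of_forall_le_add (t := t) hl
    fun u _ v hv hut htv => hη u hut v ⟨htv, hlx v hv⟩).trans ?_
  gcongr
  · exact chainSum_le_chainVariation (hl.map _ fun _ _ h => hmin h) (by simp)
  · exact chainSum_le_chainVariation (hl.map _ fun _ _ h => hmax h) (by simpa [htx] using hlx)

theorem apply_le_edist_toReal_chainVariation_Iic (hD : ∀ x y, D x y = D y x)
    (hV : chainVariation D univ ≠ ⊤) (a b : α) :
    D a b ≤ edist (chainVariation D (Iic a)).toReal (chainVariation D (Iic b)).toReal := by
  wlog hab : a ≤ b generalizing a b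
  · rw [hD, edist_comm]
    exact this b a (le_of_not_ge hab)
  have hfin (c : α) : chainVariation D (Iic c) ≠ ⊤ :=
    ne_top_of_le_ne_top hV (chainVariation_mono (subset_univ _))
  have hadd : D a b + chainVariation D (Iic a) ≤ chainVariation D (Iic b) := by
    rw [add_comm]
    refine le_trans ?_ (chainVariation_Iic_add_Icc_le hab)
    gcongr
    exact apply_le_chainVariation (left_mem_Icc.2 hab) (right_mem_Icc.2 hab) hab
  rw [edist_comm, edist_dist, Real.dist_eq]
  calc D a b ≤ chainVariation D (Iic b) - chainVariation D (Iic a) :=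
        ENNReal.le_sub_of_add_le_right (hfin a) hadd
    _ = ENNReal.ofReal ((chainVariation D (Iic b)).toReal - (chainVariation D (Iic a)).toReal) := by
        rw [ENNReal.ofReal_sub _ ENNReal.toReal_nonneg, ENNReal.ofReal_toReal (hfin a),
          ENNReal.ofReal_toReal (hfin b)]
    _ ≤ _ := ENNReal.ofReal_le_ofReal (le_abs_self _)

variable [TopologicalSpace α] [OrderClosedTopology α]

theorem lowerSemicontinuous_chainVariation_Iic (hD : Continuous (Function.uncurry D)) :
    LowerSemicontinuous fun t => chainVariation D (Iic t) :=
  lowerSemicontinuous_chainVariation hD (g := fun t x => min x t) (by fun_prop)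
    (fun t _ _ h => min_le_min_right t h) (fun _ _ => min_le_right _ _)
    fun _ _ hx => min_eq_left hx

theorem lowerSemicontinuous_chainVariation_Ici (hD : Continuous (Function.uncurry D)) :
    LowerSemicontinuous fun t => chainVariation D (Ici t) :=
  lowerSemicontinuous_chainVariation hD (g := fun t x => max x t) (by fun_prop)
    (fun t _ _ h => max_le_max_right t h) (fun _ _ => le_max_right _ _)
    fun _ _ hx => max_eq_left hx

theorem eventually_chainVariation_Icc_lt (hD : Continuous (Function.uncurry D)) {t : α}
    (hV : chainVariation D (Ici t) ≠ ⊤) {ε : ℝ≥0∞} (hε : ε ≠ 0) :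
    ∀ᶠ x in 𝓝[≥] t, chainVariation D (Icc t x) < ε := by
  have hlsc : LowerSemicontinuous fun x => chainVariation D (Ici x) + ε :=
    (lowerSemicontinuous_chainVariation_Ici hD).add lowerSemicontinuous_const
  have hnear := hlsc t _ (ENNReal.lt_add_right hV hε)
  filter_upwards [hnear.filter_mono nhdsWithin_le_nhds, self_mem_nhdsWithin] with x hx htx
  by_contra! hle
  refine hx.not_ge ?_
  calc chainVariation D (Ici x) + ε ≤ chainVariation D (Icc t x) + chainVariation D (Ici x) := by
        rw [add_comm]; gcongr
    _ ≤ chainVariation D (Ici t) := chainVariation_Icc_add_Ici_le htx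

theorem continuous_chainVariation_Iic [OrderTopology α] [CompactSpace α]
    (hD : Continuous (Function.uncurry D)) (hV : chainVariation D univ ≠ ⊤) :
    Continuous fun t => chainVariation D (Iic t) := by
  refine continuous_iff_lower_upperSemicontinuous.2
    ⟨lowerSemicontinuous_chainVariation_Iic hD, fun t y hy => ?_⟩
  obtain ⟨ε, hε, hlt⟩ := ENNReal.lt_iff_exists_add_pos_lt.1 hy
  have hε2 : (ε / 2 : ℝ≥0∞) ≠ 0 := by simpa using hε.ne'
  have hright := eventually_chainVariation_Icc_lt hD (t := t)
    (ne_top_of_le_ne_top hV (chainVariation_mono (subset_univ _))) hε2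
  have hjump := eventually_forall_mem_le_add hD (K := Iic t) (t := t) isClosed_Iic.isCompact
    (fun u hu => ne_top_of_le_ne_top hV
      (apply_le_chainVariation (mem_univ u) (mem_univ t) hu)) hε2
  have hadd : ∀ᶠ x in 𝓝[≥] t, chainVariation D (Iic x) ≤
      chainVariation D (Iic t) + chainVariation D (Icc t x) + ε / 2 := by
    have hIcc : Tendsto (fun x => Icc t x) (𝓝 t) (𝓝 t).smallSets :=
      tendsto_const_nhds.Icc tendsto_id
    filter_upwards [(hIcc.eventually (eventually_smallSets_forall.2 hjump)).filter_mono
      nhdsWithin_le_nhds, self_mem_nhdsWithin] with x hx htx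
    exact chainVariation_Iic_le_add htx fun u hu v hv => hx v hv u hu
  filter_upwards [eventually_nhdsWithin_iff.1 hright, eventually_nhdsWithin_iff.1 hadd]
    with x hsmall hx
  refine lt_of_le_of_lt ?_ hlt
  rcases le_total x t with hxt | htx
  · exact (chainVariation_mono (Iic_subset_Iic.2 hxt)).trans le_self_add
  · calc chainVariation D (Iic x)
        ≤ chainVariation D (Iic t) + chainVariation D (Icc t x) + ε / 2 := hx htx
      _ ≤ chainVariation D (Iic t) + ε / 2 + ε / 2 := by gcongr; exact (hsmall htx).le
      _ = chainVariation D (Iic t) + ε := by rw [add_assoc, ENNReal.add_halves]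

end LinearOrder

end ChainVariation

section Reparametrization

open Set
open scoped NNReal

variable {α X : Type*} [TopologicalSpace α] [CompactSpace α] [ConnectedSpace α] [Nontrivial α]
  {φ : α → ℝ}

theorem exists_equiv_unitInterval_edist_eq_mul (hφ : Continuous φ) (hinj : Function.Injective φ) :
    ∃ (e : α ≃ unitInterval) (c : ℝ≥0), ∀ a b, edist (φ a) (φ b) = c * edist (e a) (e b) := by
  obtain ⟨m, M, hrange⟩ : ∃ m M, range φ = Icc m M :=
    ⟨_, _, eq_Icc_of_connected_compact (isConnected_range hφ) (isCompact_range hφ)⟩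
  have hmem (a : α) : φ a ∈ Icc m M := hrange ▸ mem_range_self a
  have hmM : m < M := by
    obtain ⟨a, b, hab⟩ := exists_pair_ne α
    rcases (hinj.ne hab).lt_or_gt with hlt | hlt
    · exact (hmem a).1.trans_lt (hlt.trans_le (hmem b).2)
    · exact (hmem b).1.trans_lt (hlt.trans_le (hmem a).2)
  let e : α ≃ unitInterval :=
    (Equiv.ofInjective φ hinj).trans ((Equiv.setCongr hrange).trans (iccHomeoI m M hmM).toEquiv)
  have he (a : α) : φ a = (M - m) * e a + m := by
    rw [← iccHomeoI_symm_apply_coe m M hmM]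
    exact congrArg Subtype.val ((iccHomeoI m M hmM).symm_apply_apply ⟨φ a, hmem a⟩).symm
  refine ⟨e, (M - m).toNNReal, fun a b => ?_⟩
  rw [he, he, edist_add_right, Subtype.edist_eq, edist_dist, edist_dist, Real.dist_eq,
    Real.dist_eq, ← mul_sub, abs_mul, abs_of_pos (sub_pos.2 hmM),
    ENNReal.ofReal_mul (sub_pos.2 hmM).le]
  rfl

theorem exists_bijective_holderWith_of_edist_rpow_le [EMetricSpace X] (hφ : Continuous φ)
    {f : α → X} (hf : Function.Bijective f) {s : ℝ≥0} (hs : s ≠ 0)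
    (h : ∀ a b, edist (f a) (f b) ^ (s : ℝ) ≤ edist (φ a) (φ b)) :
    ∃ g : unitInterval → X, Function.Bijective g ∧ ∃ C, HolderWith C s⁻¹ g := by
  have hs0 : 0 < (s : ℝ) := by positivity
  have hinj : Function.Injective φ := fun a b hab => hf.injective <| by
    simpa [hab, hs0, hs0.not_gt] using h a b
  obtain ⟨e, c, he⟩ := exists_equiv_unitInterval_edist_eq_mul hφ hinj
  refine ⟨f ∘ e.symm, hf.comp e.symm.bijective, c ^ (s⁻¹ : ℝ), fun x y => ?_⟩
  calc edist (f (e.symm x)) (f (e.symm y))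
      ≤ (c * edist x y) ^ (s : ℝ)⁻¹ :=
        (ENNReal.le_rpow_inv_iff hs0).2 <| by simpa [he] using h (e.symm x) (e.symm y)
    _ = _ := by
      rw [ENNReal.mul_rpow_of_nonneg _ _ (by positivity), NNReal.coe_inv,
        ENNReal.coe_rpow_of_nonneg _ (by positivity)]

end Reparametrization

section Holder

open Set MeasureTheory
open scoped NNReal

theorem exists_holderOnWith_iff_exists_dist_le {X Y : Type*} [PseudoMetricSpace X]
    [PseudoMetricSpace Y] {r : ℝ≥0} {f : X → Y} {S : Set X} :
    (∃ C, HolderOnWith C r f S) ↔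
      ∃ H > 0, ∀ x ∈ S, ∀ y ∈ S, dist (f x) (f y) ≤ H * dist x y ^ (r : ℝ) := by
  constructor
  · rintro ⟨C, hC⟩
    refine ⟨C + 1, by positivity, fun x hx y hy => (hC.dist_le hx hy).trans ?_⟩
    gcongr
    simp
  · rintro ⟨H, hH, h⟩
    refine ⟨H.toNNReal, fun x hx y hy => ?_⟩
    rw [edist_dist, edist_dist, ENNReal.ofReal_rpow_of_nonneg dist_nonneg r.coe_nonneg,
      ← ENNReal.ofReal_coe_nnreal, Real.coe_toNNReal _ hH.le, ← ENNReal.ofReal_mul hH.le]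
    exact ENNReal.ofReal_le_ofReal (h x hx y hy)

theorem ediam_image_rpow_le_of_holderOnWith {X Y : Type*} [PseudoEMetricSpace X]
    [PseudoEMetricSpace Y] {C s : ℝ≥0} {f : X → Y} {S T : Set X} (hs : s ≠ 0)
    (hf : HolderOnWith C s⁻¹ f S) (hT : T ⊆ S) :
    Metric.ediam (f '' T) ^ (s : ℝ) ≤ (C : ℝ≥0∞) ^ (s : ℝ) * Metric.ediam T := by
  calc Metric.ediam (f '' T) ^ (s : ℝ)
      ≤ ((C : ℝ≥0∞) * Metric.ediam T ^ ((s⁻¹ : ℝ≥0) : ℝ)) ^ (s : ℝ) := by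
        gcongr
        exact hf.ediam_image_le_of_subset hT
    _ = (C : ℝ≥0∞) ^ (s : ℝ) * Metric.ediam T := by
        rw [ENNReal.mul_rpow_of_nonneg _ _ s.coe_nonneg, NNReal.coe_inv,
          ENNReal.rpow_inv_rpow (by simpa)]

theorem sum_ofReal_sub_le_volume {ι : Type*} {t : Finset ι} {a b : ι → ℝ} {S : Set ℝ}
    (hsub : ∀ i ∈ t, Ioo (a i) (b i) ⊆ S)
    (hdisj : (t : Set ι).PairwiseDisjoint fun i => Ioo (a i) (b i)) :
    ∑ i ∈ t, ENNReal.ofReal (b i - a i) ≤ volume S := by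
  calc ∑ i ∈ t, ENNReal.ofReal (b i - a i)
      = volume (⋃ i ∈ t, Ioo (a i) (b i)) := by
        rw [measure_biUnion_finset hdisj fun _ _ => measurableSet_Ioo]
        simp only [Real.volume_Ioo]
    _ ≤ volume S := measure_mono (iUnion₂_subset hsub)

end Holder

section Preconnected

open Set

theorem isPreconnected_image_iff_of_injOn {α β : Type*} [TopologicalSpace α] [TopologicalSpace β]
    [T2Space β] {f : α → β} {K S : Set α} (hK : IsCompact K) (hf : ContinuousOn f K)
    (hinj : InjOn f K) (hS : S ⊆ K) : IsPreconnected (f '' S) ↔ IsPreconnected S := by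
  have := isCompact_iff_compactSpace.1 hK
  have hemb := hf.domRestrict.isClosedEmbedding (injOn_iff_injective.1 hinj)
  obtain ⟨S, rfl⟩ : ∃ S' : Set K, (↑) '' S' = S :=
    ⟨(↑) ⁻¹' S, by rw [Subtype.image_preimage_coe, inter_eq_right.2 hS]⟩
  rw [image_image, Topology.IsInducing.subtypeVal.isPreconnected_image]
  exact hemb.isInducing.isPreconnected_image

theorem isPreconnected_Icc_diff_singleton_iff {α : Type*} [ConditionallyCompleteLinearOrder α]
    [TopologicalSpace α] [OrderTopology α] [DenselyOrdered α] {a b x : α} :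
    IsPreconnected (Icc a b \ {x}) ↔ x ∉ Ioo a b := by
  rw [isPreconnected_iff_ordConnected]
  constructor
  · intro h hx
    exact (h.out ⟨left_mem_Icc.2 (hx.1.trans hx.2).le, hx.1.ne⟩
      ⟨right_mem_Icc.2 (hx.1.trans hx.2).le, hx.2.ne'⟩ (Ioo_subset_Icc_self hx)).2 rfl
  · refine fun hx => ⟨fun c hc d hd z hz => ⟨⟨hc.1.1.trans hz.1, hz.2.trans hd.1.2⟩, ?_⟩⟩
    rintro rfl
    exact hx ⟨hc.1.1.trans_lt (lt_of_le_of_ne hz.1 hc.2),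
      (lt_of_le_of_ne hz.2 (Ne.symm hd.2)).trans_le hd.1.2⟩

end Preconnected

section Arc

open Set MeasureTheory
open scoped NNReal

variable {X : Type*} [MetricSpace X] {f : ℝ → X}

theorem IsArcParam.isPreconnected_image_iff (hf : IsArcParam f) {S : Set ℝ} (hS : S ⊆ Icc 0 1) :
    IsPreconnected (f '' S) ↔ IsPreconnected S :=
  isPreconnected_image_iff_of_injOn isCompact_Icc hf.1 hf.2.1 hS

theorem IsArcParam.arcInterior_image_Icc (hf : IsArcParam f) {a b : ℝ}
    (hab : Icc a b ⊆ Icc 0 1) : arcInterior (f '' Icc a b) = f '' Ioo a b := by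
  have hmem {x : ℝ} (hx : x ∈ Icc a b) : f x ∈ arcInterior (f '' Icc a b) ↔ x ∈ Ioo a b := by
    rw [arcInterior, mem_ofPred_eq, and_iff_right (mem_image_of_mem f hx), ← image_singleton,
      ← (hf.2.1.mono hab).image_sdiff_subset (singleton_subset_iff.2 hx),
      hf.isPreconnected_image_iff (sdiff_subset.trans hab),
      isPreconnected_Icc_diff_singleton_iff, not_not]
  ext y
  constructor
  · rintro hy
    obtain ⟨x, hx, rfl⟩ := hy.1
    exact mem_image_of_mem f ((hmem hx).1 hy)
  · rintro ⟨x, hx, rfl⟩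
    exact (hmem (Ioo_subset_Icc_self hx)).2 hx

theorem IsArcParam.exists_eq_image_Icc (hf : IsArcParam f) {A : Set X} (hA : IsSubarc A) :
    ∃ c d, Icc c d ⊆ Icc 0 1 ∧ A = f '' Icc c d := by
  obtain ⟨g, a, b, hg, ha, hab, hb, rfl⟩ := hA
  have hgab : ContinuousOn g (Icc a b) := hg.1.mono (Icc_subset_Icc ha hb)
  let T := Icc (0 : ℝ) 1 ∩ f ⁻¹' (g '' Icc a b)
  have hfT : f '' T = g '' Icc a b := by rw [image_inter_preimage, hf.2.2, univ_inter]
  have hT01 : T ⊆ Icc 0 1 := inter_subset_left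
  have hTcompact : IsCompact T := isCompact_Icc.of_isClosed_subset
    (hf.1.preimage_isClosed_of_isClosed isClosed_Icc
      (isCompact_Icc.image_of_continuousOn hgab).isClosed) hT01
  have hTconn : IsConnected T := by
    refine ⟨image_nonempty.1 (hfT ▸ (nonempty_Icc.2 hab).image g), ?_⟩
    rw [← hf.isPreconnected_image_iff hT01, hfT]
    exact isPreconnected_Icc.image g hgab
  have hT := eq_Icc_of_connected_compact hTconn hTcompact
  exact ⟨sInf T, sSup T, hT ▸ hT01, by rw [← hT, hfT]⟩

theorem IsArcParam.exists_Icc_of_isArcPartition (hf : IsArcParam f) {P : Finset (Set X)}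
    (hP : IsArcPartition P) :
    ∃ c d : Set X → ℝ, (∀ A ∈ P, Icc (c A) (d A) ⊆ Icc 0 1) ∧
      (∀ A ∈ P, A = f '' Icc (c A) (d A)) ∧
      (P : Set (Set X)).PairwiseDisjoint fun A => Ioo (c A) (d A) := by
  choose! c d hcd hA using fun A (hA : A ∈ P) => hf.exists_eq_image_Icc (hP.1 A hA)
  refine ⟨c, d, hcd, hA, fun A hAP B hBP hAB => ?_⟩
  have hdisj := hP.2.1 hAP hBP hAB
  rw [hA A hAP, hA B hBP, hf.arcInterior_image_Icc (hcd A hAP),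
    hf.arcInterior_image_Icc (hcd B hBP)] at hdisj
  exact hdisj.of_image

theorem IsArcParam.sVariation_le_of_holderOnWith (hf : IsArcParam f) {C s : ℝ≥0} (hs : s ≠ 0)
    (hH : HolderOnWith C s⁻¹ f (Icc 0 1)) : sVariation X s ≤ (C : ℝ≥0∞) ^ (s : ℝ) := by
  refine iSup₂_le fun P hP => ?_
  obtain ⟨c, d, hsub, himage, hdisj⟩ := hf.exists_Icc_of_isArcPartition hP
  have hdiam (A) (hA : A ∈ P) :
      Metric.ediam A ^ (s : ℝ) ≤ (C : ℝ≥0∞) ^ (s : ℝ) * ENNReal.ofReal (d A - c A) := by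
    rw [← Real.ediam_Icc]
    nth_rw 1 [himage A hA]
    exact ediam_image_rpow_le_of_holderOnWith hs hH (hsub A hA)
  calc ∑ A ∈ P, Metric.ediam A ^ (s : ℝ)
      ≤ ∑ A ∈ P, (C : ℝ≥0∞) ^ (s : ℝ) * ENNReal.ofReal (d A - c A) := Finset.sum_le_sum hdiam
    _ = (C : ℝ≥0∞) ^ (s : ℝ) * ∑ A ∈ P, ENNReal.ofReal (d A - c A) := (Finset.mul_sum ..).symm
    _ ≤ (C : ℝ≥0∞) ^ (s : ℝ) * volume (Icc (0 : ℝ) 1) := by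
        gcongr
        exact sum_ofReal_sub_le_volume (fun A hA => Ioo_subset_Icc_self.trans (hsub A hA)) hdisj
    _ = (C : ℝ≥0∞) ^ (s : ℝ) := by simp

/-- `P` is a partition of the subset `B` of a metric arc, so that `IsArcPartition P` is the case
`B = univ`. Partitions of subarcs are what an induction along a chain of points produces. -/
def IsArcPartitionOf (P : Finset (Set X)) (B : Set X) : Prop :=
  (∀ A ∈ P, IsSubarc A) ∧
    ((P : Set (Set X)).Pairwise fun A B => Disjoint (arcInterior A) (arcInterior B)) ∧
    ⋃₀ (P : Set (Set X)) = B

theorem isArcPartitionOf_singleton {A : Set X} (hA : IsSubarc A) : IsArcPartitionOf {A} A := by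
  simpa [IsArcPartitionOf] using hA

theorem IsArcPartitionOf.disjoint_image_Ico {P : Finset (Set X)} {a b c : ℝ}
    (hP : IsArcPartitionOf P (f '' Icc b c)) (hf : IsArcParam f) (hab : Ico a b ⊆ Icc 0 1)
    (hbc : Icc b c ⊆ Icc 0 1) {A : Set X} (hA : A ∈ P) : Disjoint (f '' Ico a b) A := by
  have hdisj : Disjoint (Ico a b) (Icc b c) := disjoint_left.2 fun x hx hx' => hx.2.not_ge hx'.1
  have himage : Disjoint (f '' Ico a b) (f '' Icc b c) := by
    rw [disjoint_iff_inter_eq_empty, ← hf.2.1.image_inter hab hbc, hdisj.inter_eq, image_empty]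
  exact himage.mono_right (hP.2.2 ▸ subset_sUnion_of_mem hA)

theorem IsArcPartitionOf.image_Icc_notMem {P : Finset (Set X)} {a b c : ℝ}
    (hP : IsArcPartitionOf P (f '' Icc b c)) (hf : IsArcParam f) (hab : a < b)
    (hsub : Ico a b ⊆ Icc 0 1) (hbc : Icc b c ⊆ Icc 0 1) : f '' Icc a b ∉ P := fun hmem =>
  disjoint_left.1 (hP.disjoint_image_Ico hf hsub hbc hmem)
    (mem_image_of_mem f (left_mem_Ico.2 hab)) (mem_image_of_mem f (left_mem_Icc.2 hab.le))

open Classical in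
theorem IsArcPartitionOf.insert_image_Icc {P : Finset (Set X)} {a b c : ℝ}
    (hP : IsArcPartitionOf P (f '' Icc b c)) (hf : IsArcParam f) (ha : 0 ≤ a) (hab : a ≤ b)
    (hbc : b ≤ c) (hc : c ≤ 1) : IsArcPartitionOf (insert (f '' Icc a b) P) (f '' Icc a c) := by
  have hIcc : Icc a b ⊆ Icc 0 1 := Icc_subset_Icc ha (hbc.trans hc)
  have hinterior (A) (hA : A ∈ P) : Disjoint (arcInterior (f '' Icc a b)) (arcInterior A) := by
    rw [hf.arcInterior_image_Icc hIcc]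
    exact (hP.disjoint_image_Ico hf (Ico_subset_Icc_self.trans hIcc)
      (Icc_subset_Icc (ha.trans hab) hc) hA).mono
      (image_mono Ioo_subset_Ico_self) fun x hx => hx.1
  refine ⟨?_, ?_, ?_⟩
  · exact (Finset.forall_mem_insert ..).2 ⟨⟨f, a, b, hf, ha, hab, hbc.trans hc, rfl⟩, hP.1⟩
  · rw [Finset.coe_insert]
    exact hP.2.1.insert fun A hA _ => ⟨hinterior A hA, (hinterior A hA).symm⟩
  · rw [Finset.coe_insert, sUnion_insert, hP.2.2, ← image_union, Icc_union_Icc_eq_Icc hab hbc]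

theorem IsArcParam.exists_chainSum_le_sum_ediam_rpow (hf : IsArcParam f) {s : ℝ} (hs : 0 < s)
    {a : unitInterval} {l : List unitInterval} (hl : (a :: l).Pairwise (· ≤ ·)) :
    ∃ P, IsArcPartitionOf P (f '' Icc (a : ℝ) 1) ∧
      chainSum (fun x y : unitInterval => edist (f x) (f y) ^ s) (a :: l) ≤
        ∑ A ∈ P, Metric.ediam A ^ s := by
  classical
  induction l generalizing a with
  | nil =>
    exact ⟨_, isArcPartitionOf_singleton ⟨f, a, 1, hf, a.2.1, a.2.2, le_rfl, rfl⟩, zero_le⟩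
  | cons b l ih =>
    obtain ⟨P, hP, hle⟩ := ih hl.of_cons
    rw [chainSum]
    rcases (List.rel_of_pairwise_cons hl (List.mem_cons_self ..)).eq_or_lt with rfl | hab
    · exact ⟨P, hP, by simpa [hs] using hle⟩
    · refine ⟨_, hP.insert_image_Icc hf a.2.1 hab.le b.2.2 le_rfl, ?_⟩
      rw [Finset.sum_insert (hP.image_Icc_notMem hf hab
        (Ico_subset_Icc_self.trans (Icc_subset_Icc a.2.1 b.2.2)) (Icc_subset_Icc_left b.2.1))]
      gcongr
      exact Metric.edist_le_ediam_of_mem (mem_image_of_mem f (left_mem_Icc.2 hab.le))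
        (mem_image_of_mem f (right_mem_Icc.2 hab.le))

theorem IsArcParam.chainVariation_edist_rpow_le_sVariation (hf : IsArcParam f) {s : ℝ}
    (hs : 0 < s) :
    chainVariation (fun x y : unitInterval => edist (f x) (f y) ^ s) univ ≤ sVariation X s := by
  refine chainVariation_le_iff.2 fun l hl _ => ?_
  obtain ⟨P, hP, hle⟩ := hf.exists_chainSum_le_sum_ediam_rpow hs (a := 0) (l := l)
    (List.pairwise_cons.2 ⟨fun x _ => unitInterval.nonneg', hl⟩)
  have hpartition : IsArcPartition P := by
    rwa [Set.Icc.coe_zero, hf.2.2] at hP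
  calc chainSum (fun x y : unitInterval => edist (f x) (f y) ^ s) l
      ≤ chainSum (fun x y : unitInterval => edist (f x) (f y) ^ s) (0 :: l) :=
        le_add_self.trans (chainSum_add_le_chainSum_append _ [0] l)
    _ ≤ ∑ A ∈ P, Metric.ediam A ^ s := hle
    _ ≤ sVariation X s := le_iSup₂_of_le P hpartition le_rfl

theorem IsArcParam.exists_holderOnWith_of_sVariation_ne_top (hf : IsArcParam f) {s : ℝ≥0}
    (hs : s ≠ 0) (hV : sVariation X s ≠ ⊤) :
    ∃ g : ℝ → X, InjOn g (Icc 0 1) ∧ g '' Icc 0 1 = univ ∧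
      ∃ C, HolderOnWith C s⁻¹ g (Icc 0 1) := by
  have hcont : Continuous fun x : unitInterval => f x := hf.1.domRestrict
  have hbij : Function.Bijective fun x : unitInterval => f x :=
    ⟨injOn_iff_injective.1 hf.2.1, range_eq_univ.1 ((range_domRestrict f _).trans hf.2.2)⟩
  let D (x y : unitInterval) : ℝ≥0∞ := edist (f x) (f y) ^ (s : ℝ)
  have hD : Continuous (Function.uncurry D) :=
    ENNReal.continuous_rpow_const.comp
      ((hcont.comp continuous_fst).edist (hcont.comp continuous_snd))
  have hfin : chainVariation D univ ≠ ⊤ :=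
    ne_top_of_le_ne_top hV (hf.chainVariation_edist_rpow_le_sVariation (by positivity))
  have hφ : Continuous fun t => (chainVariation D (Iic t)).toReal :=
    ENNReal.continuousOn_toReal.comp_continuous (continuous_chainVariation_Iic hD hfin)
      fun t => ne_top_of_le_ne_top hfin (chainVariation_mono (subset_univ _))
  obtain ⟨g, hg, C, hC⟩ := exists_bijective_holderWith_of_edist_rpow_le hφ hbij hs
    (apply_le_edist_toReal_chainVariation_Iic (fun x y => by simp only [edist_comm]) hfin)
  have hrestrict : (Icc (0 : ℝ) 1).domRestrict (IccExtend zero_le_one g) = g :=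
    funext fun x => IccExtend_val zero_le_one g x
  refine ⟨IccExtend zero_le_one g, ?_, ?_, C, ?_⟩
  · rw [injOn_iff_injective, hrestrict]
    exact hg.injective
  · rw [← range_domRestrict, hrestrict, hg.surjective.range_eq]
  · rw [← HolderWith.restrict_iff]
    exact hrestrict.symm ▸ hC

end Arc

theorem isHolderArc_iff_sVariation_lt_top_general (X : Type*) [MetricSpace X]
    (hX : IsMetricArc X) (s : ℝ) (hs : 0 < s) :
    (∃ f : ℝ → X, Set.InjOn f (Set.Icc 0 1) ∧ f '' Set.Icc 0 1 = Set.univ ∧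
        ∃ H > 0, ∀ x ∈ Set.Icc (0:ℝ) 1, ∀ y ∈ Set.Icc (0:ℝ) 1,
          dist (f x) (f y) ≤ H * |x - y| ^ (1 / s)) ↔
      sVariation X s < ⊤ := by
  lift s to NNReal using hs.le
  have hs0 : s ≠ 0 := by simpa using hs.ne'
  simp only [one_div, ← NNReal.coe_inv, ← Real.dist_eq, ← exists_holderOnWith_iff_exists_dist_le]
  constructor
  · rintro ⟨f, hinj, hsurj, C, hC⟩
    have hf : IsArcParam f := ⟨hC.continuousOn (by positivity), hinj, hsurj⟩
    exact (hf.sVariation_le_of_holderOnWith hs0 hC).trans_lt (by finiteness)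
  · obtain ⟨f, hf⟩ := hX
    exact fun hV => hf.exists_holderOnWith_of_sVariation_ne_top hs0 hV.ne

/-- A metric arc `X` is a `(1/s)`-Hölder arc (there is a homeomorphism `f` from `[0,1]`
onto `X` and `H > 0` with `d(f x, f y) ≤ H |x-y|^{1/s}`) iff `‖X‖_{s-var} < ∞`. -/
theorem isHolderArc_iff_sVariation_lt_top (X : Type*) [MetricSpace X]
    (hX : IsMetricArc X) (s : ℝ) (hs : 1 ≤ s) :
    (∃ f : ℝ → X, Set.InjOn f (Set.Icc 0 1) ∧ f '' Set.Icc 0 1 = Set.univ ∧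
        ∃ H > 0, ∀ x ∈ Set.Icc (0:ℝ) 1, ∀ y ∈ Set.Icc (0:ℝ) 1,
          dist (f x) (f y) ≤ H * |x - y| ^ (1 / s)) ↔
      sVariation X s < ⊤ :=
  isHolderArc_iff_sVariation_lt_top_general X hX s (zero_lt_one.trans_le hs)
end
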